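/- Let (M,g,φ,ξ,η) be a (2n+1)-dimensional para-Sasaki-like Riemannian manifold with generalized symmetric metric connection ∇̄, where α and β are constants. Then the curvature tensor R̄ of ∇̄ satisfies R̄(x,y)ξ = αη(y)φx + (β−1)η(y)x − (β−1)η(x)y − αη(x)φy for all vector fields x,y. -/

import Mathlib

/-- Abstract algebraic model of an almost paracontact almost paracomplex
Riemannian (apapR) manifold of dimension `2 n + 1`.  Here `R` plays the role of
the commutative ring of smooth functions `C^∞(M)` and `V` the `R`-module of
vector fields.  `act x f` is the derivative `x(f)` of a function along a vector
field, `bracket` is the Lie bracket, `g` the Riemannian metric, `(phi, xi, eta)`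
the almost paracontact almost paracomplex structure, `nab` the Levi-Civita
connection of `g` and `e` a (local) orthonormal frame with `e 0 = xi`. -/
structure ApapR (R V : Type*) [CommRing R] [Algebra ℝ R]
    [AddCommGroup V] [Module R V] where
  n : ℕ
  act : V → R → R
  bracket : V → V → V
  g : V → V → R
  phi : V → V
  xi : V
  eta : V → R
  nab : V → V → V
  e : Fin (2 * n + 1) → V
  act_addl : ∀ x y f, act (x + y) f = act x f + act y f
  act_smull : ∀ (h : R) (x : V) f, act (h • x) f = h * act x f
  act_addr : ∀ x f h, act x (f + h) = act x f + act x h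
  act_mul : ∀ x f h, act x (f * h) = f * act x h + h * act x f
  g_symm : ∀ x y, g x y = g y x
  g_addl : ∀ x y z, g (x + y) z = g x z + g y z
  g_smull : ∀ (f : R) x y, g (f • x) y = f * g x y
  phi_add : ∀ x y, phi (x + y) = phi x + phi y
  phi_smul : ∀ (f : R) x, phi (f • x) = f • phi x
  eta_eq : ∀ x, eta x = g x xi
  -- apapR structure axioms
  eta_xi : eta xi = 1
  phi_phi : ∀ x, phi (phi x) = x - eta x • xi
  phi_xi : phi xi = 0
  g_phi_phi : ∀ x y, g (phi x) (phi y) = g x y - eta x * eta y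
  -- orthonormal frame, `tr φ = 0`
  e_zero : e 0 = xi
  e_orthonormal : ∀ i j, g (e i) (e j) = if i = j then 1 else 0
  trace_phi : (∑ i, g (phi (e i)) (e i)) = 0
  -- Levi-Civita connection axioms
  nab_addl : ∀ x y z, nab (x + y) z = nab x z + nab y z
  nab_smull : ∀ (f : R) x y, nab (f • x) y = f • nab x y
  nab_addr : ∀ x y z, nab x (y + z) = nab x y + nab x z
  nab_leibniz : ∀ x (f : R) y, nab x (f • y) = f • nab x y + act x f • y
  nab_metric : ∀ x y z, act x (g y z) = g (nab x y) z + g y (nab x z)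
  nab_torsion : ∀ x y, nab x y - nab y x = bracket x y

namespace ApapR

variable {R V : Type*} [CommRing R] [Algebra ℝ R] [AddCommGroup V] [Module R V]

/-- The para-Sasaki-like condition `(∇_x φ)y = −g(x,y)ξ − η(y)x + 2η(x)η(y)ξ`. -/
def IsParaSasakiLike (S : ApapR R V) : Prop :=
  ∀ x y, S.nab x (S.phi y) - S.phi (S.nab x y)
    = -(S.g x y • S.xi) - S.eta y • x + (2 * S.eta x * S.eta y) • S.xi

/-- The generalized symmetric metric connection
`∇̄_x y = ∇_x y + α{g(x,y)ξ − η(y)x} + β{g(φx,y)ξ − η(y)φx}`. -/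
def gsmc (S : ApapR R V) (α β : R) (x y : V) : V :=
  S.nab x y + (α * S.g x y) • S.xi - (α * S.eta y) • x
    + (β * S.g (S.phi x) y) • S.xi - (β * S.eta y) • S.phi x

/-- Curvature tensor of a connection `D`:
`R_D(x,y)z = D_x D_y z − D_y D_x z − D_[x,y] z`. -/
def curv (S : ApapR R V) (D : V → V → V) (x y z : V) : V :=
  D x (D y z) - D y (D x z) - D (S.bracket x y) z

/-- Ricci tensor of a connection `D` with respect to the orthonormal frame. -/
def ric (S : ApapR R V) (D : V → V → V) (x y : V) : R :=
  ∑ i, S.g (S.curv D (S.e i) x y) (S.e i)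

/-- Scalar curvature of a connection `D`. -/
def scal (S : ApapR R V) (D : V → V → V) : R :=
  ∑ i, S.ric D (S.e i) (S.e i)

/-- Divergence of a vector field with respect to a connection `D`. -/
def divg (S : ApapR R V) (D : V → V → V) (x : V) : R :=
  ∑ i, S.g (D (S.e i) x) (S.e i)

/-- The associated metric `g̃(x,y) = g(x,φy) + η(x)η(y)`. -/
def tg (S : ApapR R V) (x y : V) : R := S.g x (S.phi y) + S.eta x * S.eta y

/-- A function is constant iff all its derivatives vanish. -/
def IsConstant (S : ApapR R V) (f : R) : Prop := ∀ x, S.act x f = 0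

end ApapR

namespace ApapR

variable {R V : Type*} [CommRing R] [Algebra ℝ R] [AddCommGroup V] [Module R V]

/- Write `A = ∇̄ξ`. Since `∇ξ = φ`, one finds `A = (1 - β)φ - αφ²`, so `A` takes values in `ker η`.
On `ker η` the connection `∇̄_x` differs from `∇_x` by `z ↦ g(Kx, z)ξ` with `K = α + βφ`, and
`g(Kx, Ay)` is symmetric in `x, y` because `K` and `A` are commuting self-adjoint operators. Hence
`R̄(x, y)ξ = ∇_x(Ay) - ∇_y(Ax) - A[x, y]`, which involves the Levi-Civita connection only. The right
side is linear in `A`; it is `η(x)y - η(y)x` for `A = φ` by the para-Sasaki-like condition, and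
`η(x)φy - η(y)φx` for `A = φ² = id - η ⊗ ξ` because `η` is closed. -/

section Algebra

variable (S : ApapR R V)

theorem phi_sub (x y : V) : S.phi (x - y) = S.phi x - S.phi y :=
  map_sub (AddMonoidHom.mk' S.phi S.phi_add) x y

theorem g_subl (x y z : V) : S.g (x - y) z = S.g x z - S.g y z :=
  map_sub (AddMonoidHom.mk' (S.g · z) (S.g_addl · · z)) x y

theorem g_subr (x y z : V) : S.g x (y - z) = S.g x y - S.g x z := by
  simp only [S.g_symm x, g_subl]

theorem g_smulr (f : R) (x y : V) : S.g x (f • y) = f * S.g x y := by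
  simp only [S.g_symm x, S.g_smull]

theorem eta_sub (x y : V) : S.eta (x - y) = S.eta x - S.eta y := by
  simp only [S.eta_eq, g_subl]

theorem eta_smul (f : R) (x : V) : S.eta (f • x) = f * S.eta x := by
  simp only [S.eta_eq, S.g_smull]

theorem phi_phi_phi (x : V) : S.phi (S.phi (S.phi x)) = S.phi x := by
  rw [S.phi_phi x, phi_sub, S.phi_smul, S.phi_xi, smul_zero, sub_zero]

theorem eta_phi (x : V) : S.eta (S.phi x) = 0 := by
  have eta_smul_xi : S.eta (S.phi x) • S.xi = 0 :=
    sub_eq_self.mp ((S.phi_phi (S.phi x)).symm.trans (S.phi_phi_phi x))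
  calc S.eta (S.phi x) = S.eta (S.eta (S.phi x) • S.xi) := by rw [eta_smul, S.eta_xi, mul_one]
    _ = S.eta ((0 : R) • S.xi) := by rw [eta_smul_xi, zero_smul]
    _ = 0 := by rw [eta_smul, zero_mul]

theorem g_phi_left (x y : V) : S.g (S.phi x) y = S.g x (S.phi y) := by
  have h := S.g_phi_phi x (S.phi y)
  rwa [S.phi_phi, g_subr, g_smulr, ← S.eta_eq, eta_phi, eta_phi, mul_zero, mul_zero, sub_zero,
    sub_zero] at h

end Algebra

section LeviCivita

variable (S : ApapR R V)

theorem nab_zero (x : V) : S.nab x 0 = 0 :=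
  map_zero (AddMonoidHom.mk' (S.nab x) (S.nab_addr x))

theorem nab_subr (x y z : V) : S.nab x (y - z) = S.nab x y - S.nab x z :=
  map_sub (AddMonoidHom.mk' (S.nab x) (S.nab_addr x)) y z

theorem isConstant_one : S.IsConstant 1 := fun x => by
  simpa using S.act_mul x 1 1

theorem IsConstant.sub {S : ApapR R V} {f h : R} (hf : S.IsConstant f) (hh : S.IsConstant h) :
    S.IsConstant (f - h) := fun x => by
  have act_sub : S.act x (f - h) = S.act x f - S.act x h :=
    map_sub (AddMonoidHom.mk' (S.act x) (S.act_addr x)) f h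
  rw [act_sub, hf x, hh x, sub_zero]

theorem nab_smul_of_isConstant {f : R} (hf : S.IsConstant f) (x y : V) :
    S.nab x (f • y) = f • S.nab x y := by
  rw [S.nab_leibniz, hf x, zero_smul, add_zero]

theorem g_nab_self_of_isConstant {y : V} (hy : S.IsConstant (S.g y y)) (x : V) :
    S.g (S.nab x y) y = 0 := by
  have two_smul_eq_zero : (2 : ℝ) • S.g (S.nab x y) y = 0 := by
    rw [two_smul, ← hy x, S.nab_metric, S.g_symm y]
  exact (smul_eq_zero_iff_right two_ne_zero).mp two_smul_eq_zero

theorem eta_nab_xi (x : V) : S.eta (S.nab x S.xi) = 0 := by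
  rw [S.eta_eq]
  refine S.g_nab_self_of_isConstant ?_ x
  rw [← S.eta_eq, S.eta_xi]
  exact S.isConstant_one

/-- The exterior covariant derivative `(d^∇ A)(x, y) = ∇_x(Ay) - ∇_y(Ax) - A[x, y]` of an
endomorphism field `A`, regarded as a vector-valued 1-form, for the Levi-Civita connection `∇`.
No linearity of `A` is imposed. -/
def extCovDeriv (A : V → V) (x y : V) : V :=
  S.nab x (A y) - S.nab y (A x) - A (S.bracket x y)

theorem extCovDeriv_sub (A B : V → V) (x y : V) :
    S.extCovDeriv (fun z => A z - B z) x y = S.extCovDeriv A x y - S.extCovDeriv B x y := by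
  simp only [extCovDeriv, nab_subr]
  abel

theorem extCovDeriv_smul {f : R} (hf : S.IsConstant f) (A : V → V) (x y : V) :
    S.extCovDeriv (fun z => f • A z) x y = f • S.extCovDeriv A x y := by
  simp only [extCovDeriv, S.nab_smul_of_isConstant hf, smul_sub]

end LeviCivita

section ParaSasakiLike

variable {S : ApapR R V}

namespace IsParaSasakiLike

theorem nab_xi (hS : S.IsParaSasakiLike) (x : V) : S.nab x S.xi = S.phi x := by
  have phi_nab_xi : S.phi (S.nab x S.xi) = S.phi (S.phi x) := by
    have h := hS x S.xi
    rw [S.phi_xi, nab_zero, S.eta_xi, ← S.eta_eq] at h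
    rw [S.phi_phi]
    linear_combination (norm := module) (-1 : R) • h
  calc S.nab x S.xi = S.phi (S.phi (S.nab x S.xi)) := by
        rw [S.phi_phi, eta_nab_xi, zero_smul, sub_zero]
    _ = S.phi x := by rw [phi_nab_xi, phi_phi_phi]

theorem act_eta (hS : S.IsParaSasakiLike) (x y : V) :
    S.act x (S.eta y) = S.eta (S.nab x y) + S.g y (S.phi x) := by
  rw [S.eta_eq, S.nab_metric, hS.nab_xi, ← S.eta_eq]

theorem eta_bracket (hS : S.IsParaSasakiLike) (x y : V) :
    S.eta (S.bracket x y) = S.act x (S.eta y) - S.act y (S.eta x) := by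
  rw [← S.nab_torsion, eta_sub, hS.act_eta, hS.act_eta, ← S.g_phi_left y x, S.g_symm (S.phi y) x]
  ring

theorem extCovDeriv_phi (hS : S.IsParaSasakiLike) (x y : V) :
    S.extCovDeriv S.phi x y = S.eta x • y - S.eta y • x := by
  have nab_phi_xy := hS x y
  have nab_phi_yx := hS y x
  rw [S.g_symm y x] at nab_phi_yx
  rw [extCovDeriv, ← S.nab_torsion, phi_sub]
  linear_combination (norm := module) nab_phi_xy - nab_phi_yx

theorem extCovDeriv_phi_phi (hS : S.IsParaSasakiLike) (x y : V) :
    S.extCovDeriv (fun z => S.phi (S.phi z)) x y = S.eta x • S.phi y - S.eta y • S.phi x := by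
  simp only [extCovDeriv, S.phi_phi, nab_subr, S.nab_leibniz, hS.nab_xi, hS.eta_bracket]
  rw [← S.nab_torsion]
  module

end IsParaSasakiLike

end ParaSasakiLike

section GeneralizedSymmetricMetricConnection

variable (S : ApapR R V)

/-- The endomorphism `(1 - β)φ - αφ²`. On a para-Sasaki-like manifold it is the covariant
derivative `x ↦ ∇̄_x ξ` of the Reeb field, see `IsParaSasakiLike.gsmc_xi`. -/
def gsmcXi (α β : R) (x : V) : V :=
  (1 - β) • S.phi x - α • S.phi (S.phi x)

theorem eta_gsmcXi (α β : R) (x : V) : S.eta (S.gsmcXi α β x) = 0 := by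
  rw [gsmcXi, eta_sub, eta_smul, eta_smul, eta_phi, eta_phi, mul_zero, mul_zero, sub_zero]

theorem gsmc_of_eta_eq_zero (α β : R) (x : V) {z : V} (hz : S.eta z = 0) :
    S.gsmc α β x z = S.nab x z + S.g (α • x + β • S.phi x) z • S.xi := by
  rw [gsmc, hz, S.g_addl, S.g_smull, S.g_smull]
  module

theorem g_gsmcXi_comm (α β : R) (x y : V) :
    S.g (α • x + β • S.phi x) (S.gsmcXi α β y) =
      S.g (α • y + β • S.phi y) (S.gsmcXi α β x) := by
  have phi_comm : S.g x (S.phi y) = S.g y (S.phi x) := by rw [← g_phi_left, S.g_symm]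
  have phi_phi_comm : S.g x (S.phi (S.phi y)) = S.g y (S.phi (S.phi x)) := by
    rw [← g_phi_left, ← g_phi_left, S.g_symm]
  simp only [gsmcXi, S.g_addl, S.g_smull, g_subr, g_smulr, g_phi_left, phi_phi_phi, phi_comm,
    phi_phi_comm]

theorem extCovDeriv_gsmcXi {α β : R} (hα : S.IsConstant α) (hβ : S.IsConstant β) (x y : V) :
    S.extCovDeriv (S.gsmcXi α β) x y = (1 - β) • S.extCovDeriv S.phi x y -
      α • S.extCovDeriv (fun z => S.phi (S.phi z)) x y := by
  have isConstant_one_sub : S.IsConstant (1 - β) := S.isConstant_one.sub hβ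
  rw [← S.extCovDeriv_smul isConstant_one_sub, ← S.extCovDeriv_smul hα, ← extCovDeriv_sub]
  rfl

namespace IsParaSasakiLike

variable {S}

theorem gsmc_xi (hS : S.IsParaSasakiLike) (α β : R) (x : V) :
    S.gsmc α β x S.xi = S.gsmcXi α β x := by
  rw [gsmc, gsmcXi, hS.nab_xi, ← S.eta_eq, ← S.eta_eq, eta_phi, S.eta_xi, S.phi_phi]
  module

theorem curv_gsmc_xi_eq_extCovDeriv (hS : S.IsParaSasakiLike) (α β : R) (x y : V) :
    S.curv (S.gsmc α β) x y S.xi = S.extCovDeriv (S.gsmcXi α β) x y := by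
  rw [curv, hS.gsmc_xi, hS.gsmc_xi, hS.gsmc_xi, S.gsmc_of_eta_eq_zero α β x (S.eta_gsmcXi α β y),
    S.gsmc_of_eta_eq_zero α β y (S.eta_gsmcXi α β x), S.g_gsmcXi_comm α β x y, extCovDeriv]
  abel

end IsParaSasakiLike

end GeneralizedSymmetricMetricConnection

/-- `R̄(x,y)ξ = αη(y)φx + (β−1)η(y)x − (β−1)η(x)y − αη(x)φy`
on a para-Sasaki-like manifold, for constants `α`, `β`. -/
theorem curv_gsmc_xi (S : ApapR R V) (hS : S.IsParaSasakiLike) (α β : R)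
    (hα : S.IsConstant α) (hβ : S.IsConstant β) (x y : V) :
    S.curv (S.gsmc α β) x y S.xi
      = (α * S.eta y) • S.phi x + ((β - 1) * S.eta y) • x
        - ((β - 1) * S.eta x) • y - (α * S.eta x) • S.phi y := by
  rw [hS.curv_gsmc_xi_eq_extCovDeriv, S.extCovDeriv_gsmcXi hα hβ, hS.extCovDeriv_phi,
    hS.extCovDeriv_phi_phi]
  module

end ApapR
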